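/- (The conditional entropy power bound is tighter than the Bayesian Cramér–Rao bound) Let X be a real random variable with a differentiable density f_X, finite second moment, finite differential entropy h(X), and finite Fisher information J(X) = ∫ f_X'(x)²/f_X(x) dx > 0, let W be an independent standard Gaussian, let a > 0, and let Y = X + √a·W with differential entropy h(Y). Then N(X|Y) ≥ 1/(1/a + J(X)), where N(X|Y) = a·N(X)/N(Y), N(X) = (1/(2πe)) e^{2h(X)} and N(Y) = (1/(2πe)) e^{2h(Y)}. Equality holds when X is Gaussian. -/

import Mathlib

open MeasureTheory Filter

/-- Gaussian density with variance `v`. -/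
noncomputable def gG (v z : ℝ) : ℝ := (Real.sqrt (2 * Real.pi * v))⁻¹ * Real.exp (-z ^ 2 / (2 * v))

lemma gG_pos {v : ℝ} (hv : 0 < v) (z : ℝ) : 0 < gG v z := by
  unfold gG; positivity

lemma gG_cont (v : ℝ) : Continuous (gG v) := by
  unfold gG; fun_prop

lemma gG_eq {v : ℝ} (hv : 0 < v) : gG v = ProbabilityTheory.gaussianPDFReal 0 v.toNNReal := by
  rw [ProbabilityTheory.gaussianPDFReal_def]
  funext z
  simp [gG, hv.le]

lemma gG_int {v : ℝ} (hv : 0 < v) : Integrable (gG v) := by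
  rw [gG_eq hv]; exact ProbabilityTheory.integrable_gaussianPDFReal _ _

lemma gG_integral {v : ℝ} (hv : 0 < v) : ∫ z, gG v z = 1 := by
  rw [gG_eq hv]
  exact ProbabilityTheory.integral_gaussianPDFReal_eq_one _ (by simpa using hv)

lemma gG_hasDeriv {v : ℝ} (hv : 0 < v) (z : ℝ) : HasDerivAt (gG v) (-(z / v) * gG v z) z := by
  unfold gG
  have h : HasDerivAt (fun z : ℝ => -z ^ 2 / (2 * v)) (-(z / v)) z := by
    have := (((hasDerivAt_id' z).fun_pow 2).fun_neg).div_const (2 * v)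
    refine this.congr_deriv ?_
    simp
    field_simp
  refine ((h.exp).const_mul ((Real.sqrt (2 * Real.pi * v))⁻¹)).congr_deriv ?_
  ring

lemma gG_log {v : ℝ} (hv : 0 < v) (z : ℝ) :
    Real.log (gG v z) = -(1 / 2) * Real.log (2 * Real.pi * v) - z ^ 2 / (2 * v) := by
  unfold gG
  have : 0 < 2 * Real.pi * v := by positivity
  rw [Real.log_mul (by positivity) (by positivity), Real.log_inv, Real.log_exp,
    Real.log_sqrt this.le]
  ring

lemma gG_int1 {v : ℝ} (hv : 0 < v) : Integrable (fun z => z * gG v z) := by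
  have := (integrable_mul_exp_neg_mul_sq (b := 1 / (2 * v)) (by positivity)).const_mul
    ((Real.sqrt (2 * Real.pi * v))⁻¹)
  refine this.congr (ae_of_all _ fun z => ?_)
  simp only [gG]
  rw [show -(1 / (2 * v)) * z ^ 2 = -z ^ 2 / (2 * v) by ring]
  ring

lemma gG_int2 {v : ℝ} (hv : 0 < v) : Integrable (fun z => z ^ 2 * gG v z) := by
  have := (integrable_rpow_mul_exp_neg_mul_sq (b := 1 / (2 * v)) (by positivity)
    (s := 2) (by norm_num)).const_mul ((Real.sqrt (2 * Real.pi * v))⁻¹)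
  refine this.congr (ae_of_all _ fun z => ?_)
  simp only [gG]
  rw [show -(1 / (2 * v)) * z ^ 2 = -z ^ 2 / (2 * v) by ring]
  simp only [Real.rpow_two]
  ring

lemma gG_integral1 (v : ℝ) : ∫ z, z * gG v z = 0 := by
  have h := integral_neg_eq_self (fun z => z * gG v z) volume
  have e : (fun z => -z * gG v (-z)) = fun z => -(z * gG v z) := by
    funext z; simp [gG]
  rw [e, integral_neg] at h
  linarith

lemma gG_integral2 {v : ℝ} (hv : 0 < v) : ∫ z, z ^ 2 * gG v z = v := by
  have h := integral_mul_deriv_eq_deriv_mul_of_integrable (u := fun z : ℝ => z) (v := gG v)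
    (u' := fun _ => 1) (v' := fun z => -(z / v) * gG v z) (fun z _ => hasDerivAt_id z)
    (fun z _ => gG_hasDeriv hv z) ?_ ?_ ?_
  · simp only [one_mul] at h
    rw [gG_integral hv] at h
    have e : (fun z => z * (-(z / v) * gG v z)) = fun z => (-1 / v) * (z ^ 2 * gG v z) := by
      funext z; ring
    rw [e, integral_const_mul] at h
    field_simp at h
    linarith
  · refine ((gG_int2 hv).const_mul (-1 / v)).congr (ae_of_all _ fun z => ?_)
    simp only [Pi.mul_apply]; ring
  · simpa [Pi.mul_def] using gG_int hv
  · exact gG_int1 hv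

lemma gG_intlog {v : ℝ} (hv : 0 < v) : Integrable (fun z => gG v z * Real.log (gG v z)) := by
  refine (((gG_int hv).const_mul (-(1 / 2) * Real.log (2 * Real.pi * v))).sub
    ((gG_int2 hv).const_mul (1 / (2 * v)))).congr (ae_of_all _ fun z => ?_)
  simp only [Pi.sub_apply]
  rw [gG_log hv]; ring

lemma gG_integrallog {v : ℝ} (hv : 0 < v) :
    ∫ z, gG v z * Real.log (gG v z) = -(1 / 2) * Real.log (2 * Real.pi * v) - 1 / 2 := by
  have : (fun z => gG v z * Real.log (gG v z)) = fun z =>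
      (-(1 / 2) * Real.log (2 * Real.pi * v)) * gG v z - (1 / (2 * v)) * (z ^ 2 * gG v z) := by
    funext z; rw [gG_log hv]; ring
  rw [this, integral_sub ((gG_int hv).const_mul _) ((gG_int2 hv).const_mul _),
    integral_const_mul, integral_const_mul, gG_integral hv, gG_integral2 hv]
  field_simp

/-- Distribution function facts for a positive continuous density. -/
lemma cdf_facts (p : ℝ → ℝ) (hp : ∀ x, 0 < p x) (hc : Continuous p) (hi : Integrable p)
    (h1 : ∫ x, p x = 1) :
    ∃ F : ℝ → ℝ, (∀ x, HasDerivAt F (p x) x) ∧ StrictMono F ∧ Set.range F = Set.Ioo 0 1 := by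
  set F : ℝ → ℝ := fun x => ∫ t in Set.Iic x, p t with hF
  have hd : ∀ x, HasDerivAt F (p x) x := by
    intro x
    have h := intervalIntegral.integral_hasDerivAt_right (f := p) (a := 0) (b := x)
      hi.intervalIntegrable (hc.stronglyMeasurableAtFilter _ _) hc.continuousAt
    have e : F = fun u => (∫ t in Set.Iic 0, p t) + ∫ t in (0:ℝ)..u, p t := by
      funext u
      rw [← intervalIntegral.integral_Iic_sub_Iic hi.integrableOn hi.integrableOn]
      simp [hF]
    rw [e]
    exact h.const_add _
  have hm : StrictMono F := strictMono_of_hasDerivAt_pos hd hp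
  have hbot : Tendsto F atBot (nhds 0) := by
    exact tendsto_integral_Iic_zero tendsto_id
  have htop : Tendsto F atTop (nhds 1) := by
    have := (aecover_Iic (μ := volume) (tendsto_id (α := ℝ) (x := atTop))).integral_tendsto_of_countably_generated hi
    rw [h1] at this
    exact this
  have hcont : Continuous F := continuous_iff_continuousAt.2 fun x => (hd x).continuousAt
  refine ⟨F, hd, hm, Set.Subset.antisymm ?_ ?_⟩
  · rintro _ ⟨x, rfl⟩
    constructor
    · exact (hm.monotone.le_of_tendsto hbot (x - 1)).trans_lt (hm (by linarith))
    · exact (hm (show x < x + 1 by linarith)).trans_le (hm.monotone.ge_of_tendsto htop (x + 1))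
  · intro y hy
    exact mem_range_of_exists_le_of_exists_ge hcont
      ((hbot.eventually (gt_mem_nhds hy.1)).exists.imp fun _ h => le_of_lt h)
      ((htop.eventually (lt_mem_nhds hy.2)).exists.imp fun _ h => le_of_lt h)

/-- Monotone transport to the standard Gaussian. -/
lemma transport (p : ℝ → ℝ) (hp : ∀ x, 0 < p x) (hc : Continuous p) (hi : Integrable p)
    (h1 : ∫ x, p x = 1) :
    ∃ T : ℝ → ℝ, StrictMono T ∧ ∀ x, HasDerivAt T (p x / gG 1 (T x)) x := by
  obtain ⟨F, hFd, hFm, hFr⟩ := cdf_facts p hp hc hi h1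
  obtain ⟨Q, hQd, hQm, hQr⟩ := cdf_facts (gG 1) (gG_pos one_pos) (gG_cont 1) (gG_int one_pos)
    (gG_integral one_pos)
  have hex : ∀ x, ∃ t, Q t = F x := fun x => by
    have : F x ∈ Set.range Q := by rw [hQr, ← hFr]; exact ⟨x, rfl⟩
    exact this
  choose T hT using hex
  have hTm : StrictMono T := fun x y hxy => by
    rw [← hQm.lt_iff_lt, hT, hT]; exact hFm hxy
  have hTs : Function.Surjective T := fun t => by
    have : Q t ∈ Set.range F := by rw [hFr, ← hQr]; exact ⟨t, rfl⟩
    obtain ⟨x, hx⟩ := this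
    exact ⟨x, hQm.injective (by rw [hT, hx])⟩
  have hTc : Continuous T := hTm.monotone.continuous_of_surjective hTs
  refine ⟨T, hTm, fun x => ?_⟩
  -- slopes
  have hg := gG_pos one_pos (T x)
  rw [hasDerivAt_iff_tendsto_slope]
  have hA := hasDerivAt_iff_tendsto_slope.1 (hFd x)
  have hB := hasDerivAt_iff_tendsto_slope.1 (hQd (T x))
  have hTt : Tendsto T (nhdsWithin x {x}ᶜ) (nhdsWithin (T x) {T x}ᶜ) := by
    refine tendsto_nhdsWithin_iff.2 ⟨hTc.continuousAt.tendsto.mono_left nhdsWithin_le_nhds, ?_⟩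
    filter_upwards [self_mem_nhdsWithin] with y hy
    exact fun h => hy (hTm.injective h)
  refine (hA.div (hB.comp hTt) hg.ne').congr' ?_
  filter_upwards [self_mem_nhdsWithin] with y hy
  have hy' : y - x ≠ 0 := sub_ne_zero.2 hy
  have h1 : T y - T x ≠ 0 := sub_ne_zero.2 fun h => hy (hTm.injective h)
  have h2 : F y - F x ≠ 0 := sub_ne_zero.2 fun h => hy (hFm.injective h)
  simp only [Pi.div_apply, Function.comp, slope_def_field, hT]
  field_simp

lemma freq_small (φ : ℝ → ℝ) (hφ : Integrable φ) :
    ∃ A B : ℕ → ℝ, Tendsto A atTop atBot ∧ Tendsto B atTop atTop ∧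
      Tendsto (fun n => φ (A n)) atTop (nhds 0) ∧ Tendsto (fun n => φ (B n)) atTop (nhds 0) := by
  have key : ∀ ψ : ℝ → ℝ, Integrable ψ → ∀ n : ℕ, ∃ b : ℝ, (n : ℝ) ≤ b ∧ |ψ b| ≤ 1 / ((n : ℝ) + 1) := by
    intro ψ hψ n
    by_contra! hcon
    have h1 : IntegrableOn (fun _ : ℝ => 1 / ((n : ℝ) + 1)) (Set.Ici (n : ℝ)) := by
      refine Integrable.mono' hψ.norm.integrableOn (by fun_prop) ?_
      filter_upwards [ae_restrict_mem measurableSet_Ici] with b hb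
      rw [Real.norm_of_nonneg (by positivity)]
      exact (hcon b hb).le
    rw [integrableOn_const_iff] at h1
    · rcases h1 with h | h
      · have : 0 < 1 / ((n : ℝ) + 1) := by positivity
        exact this.ne' (by simpa using h)
      · simp at h
  have lim : Tendsto (fun n : ℕ => 1 / ((n : ℝ) + 1)) atTop (nhds 0) :=
    tendsto_one_div_add_atTop_nhds_zero_nat
  choose B hB1 hB2 using key φ hφ
  choose A hA1 hA2 using key (fun x => φ (-x)) hφ.comp_neg
  refine ⟨fun n => -A n, B, ?_, ?_, ?_, ?_⟩
  · exact tendsto_neg_atTop_atBot.comp (tendsto_atTop_mono hA1 tendsto_natCast_atTop_atTop)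
  · exact tendsto_atTop_mono hB1 tendsto_natCast_atTop_atTop
  · exact squeeze_zero_norm (fun n => hA2 n) lim
  · exact squeeze_zero_norm (fun n => hB2 n) lim

/-- Gaussian log-Sobolev inequality in one dimension, normalized. -/
lemma lsi_one (p : ℝ → ℝ) (hp : ∀ x, 0 < p x) (hd : Differentiable ℝ p) (hi : Integrable p)
    (h1 : ∫ x, p x = 1) (hl : Integrable (fun x => p x * Real.log (p x)))
    (hJ : Integrable (fun x => (deriv p x) ^ 2 / p x)) (α : ℝ) (hα : 0 < α) :
    ∫ x, p x * Real.log (p x) ≤ -(1 / 2) * Real.log (2 * Real.pi) - 1 + Real.log α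
      + 1 / (2 * α ^ 2) * ∫ x, (deriv p x) ^ 2 / p x := by
  obtain ⟨T, hTm, hTd⟩ := transport p hp hd.continuous hi h1
  set K := -(1 / 2) * Real.log (2 * Real.pi) - 1 + Real.log α with hK
  have hφint : Integrable (fun x => p x * T x) := by
    have h := (integrableOn_image_iff_integrableOn_abs_deriv_smul (s := Set.univ) (f := T)
      (f' := fun x => p x / gG 1 (T x)) MeasurableSet.univ
      (fun x _ => (hTd x).hasDerivWithinAt) hTm.injective.injOn (fun t => t * gG 1 t)).1
      (gG_int1 one_pos).integrableOn
    rw [integrableOn_univ] at h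
    refine h.congr (ae_of_all _ fun x => ?_)
    have := gG_pos one_pos (T x)
    have := hp x
    simp only [smul_eq_mul]
    rw [abs_of_pos (by positivity)]
    field_simp
  obtain ⟨A, B, hA, hB, hA0, hB0⟩ := freq_small _ hφint
  set L : ℝ → ℝ := fun x => p x * Real.log (p x) - (K * p x + 1 / (2 * α ^ 2) * ((deriv p x) ^ 2 / p x))
    with hL
  have hLi : Integrable L := hl.sub ((hi.const_mul K).add (hJ.const_mul _))
  have hder : ∀ x, HasDerivAt (fun x => p x * T x / α)
      ((deriv p x * T x + p x * (p x / gG 1 (T x))) / α) x := fun x =>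
    ((hd x).hasDerivAt.mul (hTd x)).div_const α
  have hpt : ∀ x, L x ≤ (deriv p x * T x + p x * (p x / gG 1 (T x))) / α := by
    intro x
    have hpx := hp x
    have hg := gG_pos one_pos (T x)
    set S := p x / gG 1 (T x) with hS
    have hSpos : 0 < S := by positivity
    have hlog : Real.log (p x) = Real.log S - (1 / 2) * Real.log (2 * Real.pi) - (T x) ^ 2 / 2 := by
      have : p x = S * gG 1 (T x) := by rw [hS]; field_simp
      rw [this, Real.log_mul hSpos.ne' hg.ne', gG_log one_pos]
      simp; ring
    have h2 : Real.log S ≤ S / α - 1 + Real.log α := by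
      have := Real.log_le_sub_one_of_pos (show 0 < S / α by positivity)
      rw [Real.log_div hSpos.ne' hα.ne'] at this
      linarith
    have h3 : 0 ≤ (deriv p x / α + p x * T x) ^ 2 / (2 * p x) := by positivity
    have e3 : (deriv p x / α + p x * T x) ^ 2 / (2 * p x) = 1 / (2 * α ^ 2) * ((deriv p x) ^ 2 / p x)
        + deriv p x * T x / α + p x * (T x) ^ 2 / 2 := by
      field_simp
      ring
    have h4 := mul_le_mul_of_nonneg_left h2 hpx.le
    have e5 : (deriv p x * T x + p x * S) / α = deriv p x * T x / α + p x * (S / α) := by ring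
    rw [e5]
    simp only [hL, hK]
    rw [hlog]
    rw [e3] at h3
    linarith
  have hmain : ∫ x, L x ≤ 0 := by
    have hlim := intervalIntegral_tendsto_integral hLi hA hB
    have hlim2 : Tendsto (fun n => p (B n) * T (B n) / α - p (A n) * T (A n) / α) atTop (nhds 0) := by
      simpa using (hB0.div_const α).sub (hA0.div_const α)
    refine le_of_tendsto_of_tendsto hlim hlim2 ?_
    filter_upwards [hA.eventually (eventually_le_atBot 0), hB.eventually (eventually_ge_atTop 0)]
      with n hn1 hn2
    exact intervalIntegral.integral_le_sub_of_hasDeriv_right_of_le (hn1.trans hn2)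
      (fun x _ => (hder x).continuousAt.continuousWithinAt)
      (fun x _ => (hder x).hasDerivWithinAt) hLi.integrableOn (fun x _ => hpt x)
  have eL : ∫ x, L x = (∫ x, p x * Real.log (p x))
      - ∫ x, (K * p x + 1 / (2 * α ^ 2) * ((deriv p x) ^ 2 / p x)) :=
    integral_sub hl ((hi.const_mul K).add (hJ.const_mul _))
  rw [eL, integral_add (hi.const_mul K) (hJ.const_mul _), integral_const_mul, integral_const_mul, h1] at hmain
  linarith

/-- Log-Sobolev inequality for an unnormalized density. -/
lemma lsi (u : ℝ → ℝ) (hp : ∀ x, 0 < u x) (hd : Differentiable ℝ u) (hi : Integrable u)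
    (hl : Integrable (fun x => u x * Real.log (u x)))
    (hJ : Integrable (fun x => (deriv u x) ^ 2 / u x)) (α : ℝ) (hα : 0 < α) :
    (∫ x, u x * Real.log (u x)) - (-(1 / 2) * Real.log (2 * Real.pi) - 1 + Real.log α) * (∫ x, u x)
      - 1 / (2 * α ^ 2) * ∫ x, (deriv u x) ^ 2 / u x
      ≤ (∫ x, u x) * Real.log (∫ x, u x) := by
  set m := ∫ x, u x with hm
  have hmpos : 0 < m := by
    rw [hm, integral_pos_iff_support_of_nonneg (fun x => (hp x).le) hi]
    have : Function.support u = Set.univ := by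
      ext x; simp [(hp x).ne']
    simp [this]
  have e1 : (fun x => u x / m * Real.log (u x / m)) =
      fun x => m⁻¹ * (u x * Real.log (u x)) - (m⁻¹ * Real.log m) * u x := by
    funext x
    rw [Real.log_div (hp x).ne' hmpos.ne']; ring
  have e2 : (fun x => (deriv (fun x => u x / m) x) ^ 2 / (u x / m)) =
      fun x => m⁻¹ * ((deriv u x) ^ 2 / u x) := by
    funext x
    have := hp x
    rw [deriv_div_const]; field_simp
  have h := lsi_one (fun x => u x / m) (fun x => div_pos (hp x) hmpos) (hd.div_const m)
    (hi.div_const m) (by rw [integral_div, ← hm, div_self hmpos.ne'])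
    (by rw [e1]; exact (hl.const_mul _).sub (hi.const_mul _))
    (by rw [e2]; exact hJ.const_mul _) α hα
  rw [e1, e2, integral_sub (hl.const_mul _) (hi.const_mul _), integral_const_mul, integral_const_mul,
    integral_const_mul, ← hm] at h
  have h' := mul_le_mul_of_nonneg_left h hmpos.le
  field_simp at h' ⊢
  linarith

lemma int_three {f g h : ℝ → ℝ} (hf : Integrable f) (hg : Integrable g) (hh : Integrable h) (c d : ℝ) :
    ∫ x, (f x + c * g x + d * h x) = (∫ x, f x) + c * (∫ x, g x) + d * ∫ x, h x := by
  have h1 : ∫ x, (f x + c * g x + d * h x) = (∫ x, (f x + c * g x)) + ∫ x, d * h x :=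
    integral_add (hf.add (hg.const_mul c)) (hh.const_mul d)
  rw [h1, integral_add hf (hg.const_mul c), integral_const_mul, integral_const_mul]

lemma conv_facts (f k : ℝ → ℝ) (hf : Integrable f) (hk : Integrable k) :
    (∀ᵐ y, Integrable (fun x => f x * k (y - x))) ∧
    Integrable (fun y => ∫ x, f x * k (y - x)) ∧
    (∫ y, ∫ x, f x * k (y - x)) = (∫ x, f x) * ∫ z, k z := by
  have h := Integrable.convolution_integrand (ContinuousLinearMap.mul ℝ ℝ) hf hk
  refine ⟨h.prod_right_ae, h.integral_prod_left, ?_⟩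
  exact integral_convolution (ContinuousLinearMap.mul ℝ ℝ) hf hk

lemma entropy_gap (f : ℝ → ℝ) (hp : ∀ x, 0 < f x) (hd : Differentiable ℝ f)
    (h1 : (∫ x, f x) = 1)
    (hl : Integrable (fun x => f x * Real.log (f x)))
    (hJ : Integrable (fun x => (deriv f x) ^ 2 / f x))
    (hJp : 0 < ∫ x, (deriv f x) ^ 2 / f x) (a : ℝ) (ha : 0 < a) (m : ℝ → ℝ)
    (hm : ∀ y, m y = ∫ x, f x * gG a (y - x)) :
    (∫ x, f x * Real.log (f x)) - (1 / 2) * Real.log (a * (1 / a + ∫ x, (deriv f x) ^ 2 / f x))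
      ≤ ∫ y, m y * Real.log (m y) := by
  have hi : Integrable f := by
    by_contra h
    rw [integral_undef h] at h1
    exact zero_ne_one h1
  set J := ∫ x, (deriv f x) ^ 2 / f x with hJdef
  have hid : Integrable (deriv f) := by
    refine Integrable.mono' (hJ.add hi) (measurable_deriv f).aestronglyMeasurable
      (ae_of_all _ fun x => ?_)
    have hx := hp x
    simp only [Pi.add_apply, Real.norm_eq_abs]
    rw [div_add' _ _ _ hx.ne', le_div_iff₀ hx]
    nlinarith [sq_nonneg (|deriv f x| - f x), sq_abs (deriv f x), abs_nonneg (deriv f x), sq_nonneg (f x)]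
  set c := 1 / a + J with hc
  have hcpos : 0 < c := by positivity
  set α := Real.sqrt c with hαdef
  have hα : 0 < α := Real.sqrt_pos.2 hcpos
  have hα2 : α ^ 2 = c := Real.sq_sqrt hcpos.le
  have hlogα : Real.log α = (1 / 2) * Real.log c := by
    rw [hαdef, Real.log_sqrt hcpos.le]; ring
  obtain ⟨a0, i0, e0⟩ := conv_facts f (gG a) hi (gG_int ha)
  obtain ⟨a1, i1, e1⟩ := conv_facts _ (gG a) hl (gG_int ha)
  obtain ⟨a2, i2, e2⟩ := conv_facts f _ hi (gG_intlog ha)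
  obtain ⟨a3, i3, e3⟩ := conv_facts _ (gG a) hJ (gG_int ha)
  obtain ⟨a4, i4, e4⟩ := conv_facts _ _ hid (gG_int1 ha)
  obtain ⟨a5, i5, e5⟩ := conv_facts f _ hi (gG_int2 ha)
  rw [h1, gG_integral ha] at e0
  rw [gG_integral ha] at e1 e3
  rw [h1, gG_integrallog ha] at e2
  rw [gG_integral1] at e4
  rw [h1, gG_integral2 ha] at e5
  set K := -(1 / 2) * Real.log (2 * Real.pi) - 1 + Real.log α with hK
  set Lo : ℝ → ℝ := fun y =>
    ((∫ x, f x * Real.log (f x) * gG a (y - x))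
      + ∫ x, f x * (gG a (y - x) * Real.log (gG a (y - x))))
    - K * (∫ x, f x * gG a (y - x))
    - 1 / (2 * α ^ 2) * ((∫ x, (deriv f x) ^ 2 / f x * gG a (y - x))
      + 2 / a * (∫ x, deriv f x * ((y - x) * gG a (y - x)))
      + 1 / a ^ 2 * (∫ x, f x * ((y - x) ^ 2 * gG a (y - x)))) with hLo
  have hLoi : Integrable Lo :=
    ((i1.add i2).sub (i0.const_mul K)).sub
      (((i3.add (i4.const_mul (2 / a))).add (i5.const_mul (1 / a ^ 2))).const_mul _)
  have hLoint : ∫ y, Lo y = ((∫ x, f x * Real.log (f x)) * 1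
      + 1 * (-(1 / 2) * Real.log (2 * Real.pi * a) - 1 / 2)) - K * (1 * 1)
      - 1 / (2 * α ^ 2) * (J * 1 + 2 / a * ((∫ x, deriv f x) * 0) + 1 / a ^ 2 * (1 * a)) := by
    have s1 := integral_sub ((i1.add i2).sub (i0.const_mul K))
      (((i3.add (i4.const_mul (2 / a))).add (i5.const_mul (1 / a ^ 2))).const_mul (1 / (2 * α ^ 2)))
    have s2 := integral_sub (i1.add i2) (i0.const_mul K)
    have s3 := integral_add i1 i2
    have s4 := int_three i3 i4 i5 (2 / a) (1 / a ^ 2)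
    have s5 := integral_const_mul (μ := volume) K (fun y => ∫ x, f x * gG a (y - x))
    rw [← e0, ← e1, ← e2, ← e3, ← e4, ← e5, ← s4, ← s5, ← s3, ← integral_const_mul]
    exact s1.trans (congrArg (fun t => t - _) s2)
  have hlow : ∀ᵐ y, Lo y ≤ m y * Real.log (m y) := by
    filter_upwards [a0, a1, a2, a3, a4, a5] with y b0 b1 b2 b3 b4 b5
    have hud : ∀ x, HasDerivAt (fun x => f x * gG a (y - x))
        (deriv f x * gG a (y - x) + f x * ((y - x) / a * gG a (y - x))) x := by
      intro x
      have hz : HasDerivAt (fun x => y - x) (-1) x := by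
        simpa using (hasDerivAt_id' x).const_sub y
      have hg := (gG_hasDeriv ha (y - x)).comp x hz
      refine ((hd x).hasDerivAt.mul hg).congr_deriv ?_
      simp only [Function.comp]
      ring
    have E1 : (fun x => f x * gG a (y - x) * Real.log (f x * gG a (y - x))) = fun x =>
        f x * Real.log (f x) * gG a (y - x) + f x * (gG a (y - x) * Real.log (gG a (y - x))) := by
      funext x
      rw [Real.log_mul (hp x).ne' (gG_pos ha _).ne']; ring
    have E2 : (fun x => (deriv (fun x => f x * gG a (y - x)) x) ^ 2 / (f x * gG a (y - x))) = fun x =>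
        (deriv f x) ^ 2 / f x * gG a (y - x) + 2 / a * (deriv f x * ((y - x) * gG a (y - x)))
          + 1 / a ^ 2 * (f x * ((y - x) ^ 2 * gG a (y - x))) := by
      funext x
      have := hp x
      have := gG_pos ha (y - x)
      rw [(hud x).deriv]
      field_simp
      ring
    have h := lsi (fun x => f x * gG a (y - x)) (fun x => mul_pos (hp x) (gG_pos ha _))
      (fun x => (hud x).differentiableAt) b0 (by rw [E1]; exact b1.add b2)
      (by rw [E2]; exact (b3.add (b4.const_mul _)).add (b5.const_mul _)) α hα
    rw [E1, E2, integral_add b1 b2, int_three b3 b4 b5] at h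
    rw [hm y]
    exact h
  have hmi : Integrable m := i0.congr (ae_of_all _ fun y => (hm y).symm)
  have hup : ∀ᵐ y, m y * Real.log (m y) ≤ Real.log (gG a 0) * m y := by
    filter_upwards [a0] with y b0
    have hmle : m y ≤ gG a 0 := by
      rw [hm y]
      calc ∫ x, f x * gG a (y - x) ≤ ∫ x, f x * gG a 0 := by
            refine integral_mono b0 (hi.mul_const _) fun x => ?_
            refine mul_le_mul_of_nonneg_left ?_ (hp x).le
            unfold gG
            refine mul_le_mul_of_nonneg_left (Real.exp_le_exp.2 ?_) (by positivity)
            rw [div_le_div_iff_of_pos_right (by positivity)]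
            nlinarith [sq_nonneg (y - x)]
        _ = gG a 0 := by rw [integral_mul_const, h1, one_mul]
    have hm0 : 0 ≤ m y := by
      rw [hm y]; exact integral_nonneg fun x => (mul_pos (hp x) (gG_pos ha _)).le
    rcases hm0.eq_or_lt with h | h
    · rw [← h]; simp
    · rw [mul_comm]
      exact mul_le_mul_of_nonneg_right (Real.log_le_log h hmle) hm0
  have hmm : AEStronglyMeasurable (fun y => m y * Real.log (m y)) volume :=
    Real.continuous_mul_log.comp_aestronglyMeasurable hmi.aestronglyMeasurable
  have hint : Integrable (fun y => m y * Real.log (m y)) :=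
    integrable_of_le_of_le hmm hlow hup hLoi (hmi.const_mul _)
  have hfin := integral_mono_ae hLoi hint hlow
  rw [hLoint, hα2, hK, hlogα] at hfin
  refine le_trans (le_of_eq ?_) hfin
  rw [Real.log_mul ha.ne' hcpos.ne', Real.log_mul (by positivity : (2 * Real.pi) ≠ 0) ha.ne']
  have : 1 / (2 * c) * (J * 1 + 2 / a * ((∫ x, deriv f x) * 0) + 1 / a ^ 2 * (1 * a)) = 1 / 2 := by
    have : J * 1 + 2 / a * ((∫ x, deriv f x) * 0) + 1 / a ^ 2 * (1 * a) = c := by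
      rw [hc]; field_simp; ring
    rw [this]; field_simp
  rw [this]
  ring

lemma gG_conv {v a : ℝ} (hv : 0 < v) (ha : 0 < a) (w : ℝ) :
    ∫ x, gG v x * gG a (w - x) = gG (v + a) w := by
  have e : (fun x => gG v x * gG a (w - x)) = fun x =>
      gG (v + a) w * gG (v * a / (v + a)) (x - w * v / (v + a)) := by
    funext x
    unfold gG
    have h1 : (Real.sqrt (2 * Real.pi * v))⁻¹ * (Real.sqrt (2 * Real.pi * a))⁻¹ =
        (Real.sqrt (2 * Real.pi * (v + a)))⁻¹ * (Real.sqrt (2 * Real.pi * (v * a / (v + a))))⁻¹ := by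
      rw [← mul_inv, ← mul_inv, ← Real.sqrt_mul (by positivity), ← Real.sqrt_mul (by positivity)]
      congr 2
      field_simp
    have h2 : Real.exp (-x ^ 2 / (2 * v)) * Real.exp (-(w - x) ^ 2 / (2 * a)) =
        Real.exp (-w ^ 2 / (2 * (v + a))) *
          Real.exp (-(x - w * v / (v + a)) ^ 2 / (2 * (v * a / (v + a)))) := by
      rw [← Real.exp_add, ← Real.exp_add]
      congr 1
      field_simp
      ring
    linear_combination (Real.exp (-x ^ 2 / (2 * v)) * Real.exp (-(w - x) ^ 2 / (2 * a))) * h1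
      + ((Real.sqrt (2 * Real.pi * (v + a)))⁻¹ * (Real.sqrt (2 * Real.pi * (v * a / (v + a))))⁻¹) * h2
  rw [e, integral_const_mul, integral_sub_right_eq_self (gG (v * a / (v + a))),
    gG_integral (by positivity), mul_one]

/-- **The conditional entropy power bound is tighter than the Bayesian
Cramér–Rao bound.** For the additive Gaussian noise channel `Y = X + √a·W`,
`N(X|Y) = a·N(X)/N(Y) ≥ 1/(1/a + J(X))`, with equality when `X` is
Gaussian. -/
theorem entropy_power_bound_tighter_than_bcrlb
    (fX : ℝ → ℝ)
    (hfX_pos : ∀ x, 0 < fX x)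
    (hfX_diff : Differentiable ℝ fX)
    (hfX_prob : (∫ x, fX x) = 1)
    (hfX_mom : Integrable (fun x => x ^ 2 * fX x))
    (hfX_ent : Integrable (fun x => fX x * Real.log (fX x)))
    (hfX_fisher_int : Integrable (fun x => (deriv fX x) ^ 2 / fX x))
    (hfX_fisher_pos : 0 < ∫ x, (deriv fX x) ^ 2 / fX x)
    (a : ℝ) (ha : 0 < a)
    (fY : ℝ → ℝ)
    (hfY : ∀ y, fY y =
      ∫ x, fX x * ((Real.sqrt (2 * Real.pi * a))⁻¹ *
        Real.exp (-(y - x) ^ 2 / (2 * a))))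
    (entX entY : ℝ)
    (hentX : entX = -∫ x, fX x * Real.log (fX x))
    (hentY : entY = -∫ y, fY y * Real.log (fY y)) :
    a * ((2 * Real.pi * Real.exp 1)⁻¹ * Real.exp (2 * entX)) /
        ((2 * Real.pi * Real.exp 1)⁻¹ * Real.exp (2 * entY))
      ≥ 1 / (1 / a + ∫ x, (deriv fX x) ^ 2 / fX x) ∧
    (∀ μ σ : ℝ, 0 < σ →
      (∀ x, fX x = (Real.sqrt (2 * Real.pi * σ ^ 2))⁻¹ *
        Real.exp (-(x - μ) ^ 2 / (2 * σ ^ 2))) →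
      a * ((2 * Real.pi * Real.exp 1)⁻¹ * Real.exp (2 * entX)) /
          ((2 * Real.pi * Real.exp 1)⁻¹ * Real.exp (2 * entY))
        = 1 / (1 / a + ∫ x, (deriv fX x) ^ 2 / fX x)) := by
  have hfY' : ∀ y, fY y = ∫ x, fX x * gG a (y - x) := hfY
  set J := ∫ x, (deriv fX x) ^ 2 / fX x with hJ
  have hsimp : a * ((2 * Real.pi * Real.exp 1)⁻¹ * Real.exp (2 * entX)) /
      ((2 * Real.pi * Real.exp 1)⁻¹ * Real.exp (2 * entY)) = a * Real.exp (2 * entX - 2 * entY) := by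
    rw [Real.exp_sub]
    have := Real.exp_pos 1
    field_simp
  rw [hsimp]
  constructor
  · have h := entropy_gap fX hfX_pos hfX_diff hfX_prob hfX_ent hfX_fisher_int hfX_fisher_pos a ha fY hfY'
    rw [← hJ] at h
    have hc : 0 < a * (1 / a + J) := by positivity
    have h2 : -Real.log (a * (1 / a + J)) ≤ 2 * entX - 2 * entY := by
      rw [hentX, hentY]; linarith
    have h3 := Real.exp_le_exp.2 h2
    rw [Real.exp_neg, Real.exp_log hc] at h3
    have h4 := mul_le_mul_of_nonneg_left h3 ha.le
    have h5 : a * (a * (1 / a + J))⁻¹ = 1 / (1 / a + J) := by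
      field_simp
    rw [h5] at h4
    exact h4
  · intro μ σ hσ hg
    have hv : 0 < σ ^ 2 := by positivity
    have hfe : fX = fun x => gG (σ ^ 2) (x - μ) := funext hg
    have hfYe : fY = fun y => gG (σ ^ 2 + a) (y - μ) := by
      funext y
      rw [hfY' y, hfe, ← gG_conv hv ha (y - μ),
        ← integral_sub_right_eq_self (fun x => gG (σ ^ 2) x * gG a (y - μ - x)) μ]
      simp
    have hX : entX = -(-(1 / 2) * Real.log (2 * Real.pi * σ ^ 2) - 1 / 2) := by
      rw [hentX, hfe, integral_sub_right_eq_self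
        (fun x => gG (σ ^ 2) x * Real.log (gG (σ ^ 2) x)) μ, gG_integrallog hv]
    have hY : entY = -(-(1 / 2) * Real.log (2 * Real.pi * (σ ^ 2 + a)) - 1 / 2) := by
      rw [hentY, hfYe, integral_sub_right_eq_self
        (fun x => gG (σ ^ 2 + a) x * Real.log (gG (σ ^ 2 + a) x)) μ, gG_integrallog (by positivity)]
    have hJe : J = 1 / σ ^ 2 := by
      have e : (fun x => (deriv fX x) ^ 2 / fX x) =
          fun x => (1 / σ ^ 4) * ((x - μ) ^ 2 * gG (σ ^ 2) (x - μ)) := by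
        funext x
        have hp := gG_pos hv (x - μ)
        have hd : deriv fX x = -((x - μ) / σ ^ 2) * gG (σ ^ 2) (x - μ) := by
          rw [hfe]
          exact ((gG_hasDeriv hv (x - μ)).comp_sub_const x μ).deriv
        rw [hd, hfe]
        field_simp
      rw [hJ, e, integral_const_mul, integral_sub_right_eq_self
        (fun x => x ^ 2 * gG (σ ^ 2) x) μ, gG_integral2 hv]
      field_simp
    have hd : 2 * entX - 2 * entY = Real.log (σ ^ 2 / (σ ^ 2 + a)) := by
      rw [hX, hY, Real.log_mul (by positivity) hv.ne',
        Real.log_mul (x := 2 * Real.pi) (y := σ ^ 2 + a) (by positivity) (by positivity),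
        Real.log_div hv.ne' (by positivity)]
      ring
    rw [hd, Real.exp_log (by positivity), hJe]
    field_simp
    try ring
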